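/- Let N ≥ 1 and let σ be the step sequence of a Dyck path of length 2N with a slope at j (σ(j)=σ(j+1)), for some j ∈ {1,…,2N−1}. Then the function F = U_{σ/×_j} of the variables (x_1,…,x_{j−1},ξ,x_{j+2},…,x_{2N}) satisfies, for every n ∈ {1,…,2N}∖{j,j+1} and at every point of the chamber x_1<⋯<x_{j−1}<ξ<x_{j+2}<⋯<x_{2N}, the second-order PDE (κ=4, h=1/4, H=1): ∂²F/∂x_n² = Σ_{i∉{j,j+1,n}} ( (1/4)·F/(x_i−x_n)² − (∂F/∂x_i)/(x_i−x_n) ) + F/(ξ−x_n)² − (∂F/∂ξ)/(ξ−x_n). -/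

import Mathlib

/-!
On the fused chamber, `U_{σ/×_j}` is a Coulomb gas correlation `∏_{a<b} |x_b - x_a|^{s_a s_b/2}`,
where the unfused points carry the charges `s_i = σ i = ±1` and the fused point `ξ` carries
`s_ξ = 2 σ j` (`Ufuse_eq_exp`). Hence its logarithmic derivatives are
`G_i = ∑_b s_i s_b / (2 (x_i - x_b))`, and `∂_n² U / U = G_n² + ∂_n G_n`. The coefficients `1/4`
and `1` of the equation are both `s_i² / 4`, so the equation becomes the rational identity
`G_n² + ∂_n G_n = ∑_{i ≠ n} (s_i² / (4 (x_i - x_n)²) - G_i / (x_i - x_n))`.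

In `∑_i G_i / (x_i - x_n)` the terms with `b ≠ n` are symmetrised in `(i, b)` by partial fractions
and give `-∑_{i ≠ b} s_i s_b / (4 (x_i - x_n) (x_b - x_n))`, the off-diagonal part of `-G_n²` as
`s_n² = 1`; the terms with `b = n` give `-∂_n G_n`, and the diagonal part of `G_n²` is the sum of
the `s_i² / (4 (x_i - x_n)²)` (`coulomb_identity`).

All sums run over full index sets, diagonal included: the diagonal terms vanish by the conventions
`log 0 = 0` and `0⁻¹ = 0`.
-/


open Filter Finset
open scoped BigOperators Classical Topology

noncomputable section

/-- The open chamber `x 0 < x 1 < ⋯ < x (n-1)`. -/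
def chamber (n : ℕ) : Set (Fin n → ℝ) := {x | ∀ i j : Fin n, i < j → x i < x j}

/-- Planar pair partitions of `{0, …, 2N-1}` (i.e. of `{1,…,2N}` in 1-based labelling),
encoded as noncrossing fixed-point-free involutions: the links are the pairs `{i, f i}`. -/
def PlanarPair (N : ℕ) : Type :=
  {f : Fin (2 * N) → Fin (2 * N) //
    (∀ i, f (f i) = i) ∧ (∀ i, f i ≠ i) ∧
      ∀ i j, i < j → j < f i → i < f j ∧ f j < f i}

instance (N : ℕ) : Fintype (PlanarPair N) := by
  unfold PlanarPair; infer_instance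

/-- The Dyck step sequence of a planar pair partition: `+1` at openers, `-1` at closers. -/
def pairSign {N : ℕ} (α : PlanarPair N) (i : Fin (2 * N)) : ℝ :=
  if i < α.val i then 1 else -1

/-- The conformal block of a sign sequence: `∏_{i<j} (x_j - x_i)^{σ_i σ_j / 2}`. -/
def cblock {n : ℕ} (σ : Fin n → ℝ) (x : Fin n → ℝ) : ℝ :=
  ∏ p ∈ univ.filter (fun p : Fin n × Fin n => p.1 < p.2),
    (x p.2 - x p.1) ^ (σ p.1 * σ p.2 / 2)

/-- `σ` is the step sequence of a Dyck path. -/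
def IsDyck {n : ℕ} (σ : Fin n → ℝ) : Prop :=
  (∀ i, σ i = 1 ∨ σ i = -1) ∧
    (∀ k : Fin n, 0 ≤ ∑ i ∈ univ.filter (fun i : Fin n => i ≤ k), σ i) ∧
    ∑ i, σ i = 0

/-- The relation `α ⟵ β`: every link of `β` joins an opener of `α` to a closer of `α`. -/
def kwRel {N : ℕ} (α β : PlanarPair N) : Prop :=
  ∀ i, (i < α.val i) ↔ ¬ β.val i < α.val (β.val i)

/-- The incidence matrix `M` of the relation `⟵`. -/
def Mmat (N : ℕ) : Matrix (PlanarPair N) (PlanarPair N) ℝ :=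
  fun α β => if kwRel α β then 1 else 0

/-- The κ = 4 pure partition functions `Z_α = Σ_β (M⁻¹)_{α,β} U_β`. -/
def pureZ {N : ℕ} (α : PlanarPair N) (x : Fin (2 * N) → ℝ) : ℝ :=
  ∑ β : PlanarPair N, (Mmat N)⁻¹ α β * cblock (pairSign β) x

/-- Partial derivative in the `i`-th coordinate. -/
def pd {n : ℕ} (i : Fin n) (f : (Fin n → ℝ) → ℝ) : (Fin n → ℝ) → ℝ :=
  fun x => fderiv ℝ f x (Pi.single i 1)

/-- Doubling a configuration point: the limit point of total fusion. -/
def dup {N : ℕ} (y : Fin (2 * N) → ℝ) : Fin (2 * (2 * N)) → ℝ :=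
  fun i => y ⟨i.val / 2, by have := i.2; omega⟩

/-- The fusion normalization `∏_j (x_{2j} - x_{2j-1})^{1/2}`. -/
def fuseDenom {N : ℕ} (x : Fin (2 * (2 * N)) → ℝ) : ℝ :=
  ∏ j : Fin (2 * N),
    (x ⟨2 * j.val + 1, by have := j.2; omega⟩ - x ⟨2 * j.val, by have := j.2; omega⟩) ^
      ((1 : ℝ) / 2)

/-- `α` contains no link of the form `{2j-1, 2j}` (1-based). -/
def noFuseLink {N : ℕ} (α : PlanarPair (2 * N)) : Prop :=
  ∀ j : Fin (2 * N),
    α.val ⟨2 * j.val, by have := j.2; omega⟩ ≠ ⟨2 * j.val + 1, by have := j.2; omega⟩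

/-- The fused pure partition function `Ẑ_α`, defined as the fusion limit. -/
def fusedZ {N : ℕ} (α : PlanarPair (2 * N)) (y : Fin (2 * N) → ℝ) : ℝ :=
  limUnder (𝓝[chamber (2 * (2 * N))] dup y) fun x => pureZ α x / fuseDenom x

/-- The single-fusion of a conformal block with a slope at `j` (0-based `j`, `j+1`);
the fused point `ξ` sits at coordinate `j`, and coordinate `j+1` is ignored. -/
def Ufuse {n : ℕ} (σ : Fin n → ℝ) (j : ℕ) (hj : j + 1 < n) (x : Fin n → ℝ) : ℝ :=
  (∏ p ∈ univ.filter (fun p : Fin n × Fin n =>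
      p.1 < p.2 ∧ p.1.val ≠ j ∧ p.1.val ≠ j + 1 ∧ p.2.val ≠ j ∧ p.2.val ≠ j + 1),
    (x p.2 - x p.1) ^ (σ p.1 * σ p.2 / 2)) *
  ∏ i ∈ univ.filter (fun i : Fin n => i.val ≠ j ∧ i.val ≠ j + 1),
    |x i - x ⟨j, by omega⟩| ^ (σ i * σ ⟨j, by omega⟩)

/-- The single-fusion `V_{σ/∨_j}` of a conformal block with a local minimum at `j`. -/
def Vfuse {n : ℕ} (σ : Fin n → ℝ) (j : ℕ) (hj : j + 1 < n) (x : Fin n → ℝ) : ℝ :=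
  (∏ p ∈ univ.filter (fun p : Fin n × Fin n =>
      p.1 < p.2 ∧ p.1.val ≠ j ∧ p.1.val ≠ j + 1 ∧ p.2.val ≠ j ∧ p.2.val ≠ j + 1),
    (x p.2 - x p.1) ^ (σ p.1 * σ p.2 / 2)) *
  ∑ i ∈ univ.filter (fun i : Fin n => i.val ≠ j ∧ i.val ≠ j + 1),
    σ i * σ ⟨j, by omega⟩ / (x i - x ⟨j, by omega⟩)

/-- The single-fusion `Z_{α/⨿_j}` of a pure partition function. -/
def Zfuse {N : ℕ} (α : PlanarPair N) (j : ℕ) (hj : j + 1 < 2 * N) (x : Fin (2 * N) → ℝ) : ℝ :=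
  (∑ β ∈ univ.filter (fun β : PlanarPair N =>
      pairSign β ⟨j, by omega⟩ = -1 ∧ pairSign β ⟨j + 1, hj⟩ = 1),
    (Mmat N)⁻¹ α β * Vfuse (pairSign β) j hj x) +
  ∑ β ∈ univ.filter (fun β : PlanarPair N =>
      pairSign β ⟨j, by omega⟩ = pairSign β ⟨j + 1, hj⟩),
    (Mmat N)⁻¹ α β * Ufuse (pairSign β) j hj x

/-- The chamber `x_1 < ⋯ < x_{j-1} < ξ < x_{j+2} < ⋯` for single fusion at `j`:
coordinate `j` carries `ξ` and coordinate `j+1` is ignored. -/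
def fusedChamber (n j : ℕ) : Set (Fin n → ℝ) :=
  {x | ∀ k l : Fin n, k < l → k.val ≠ j + 1 → l.val ≠ j + 1 → x k < x l}

/-- Successor inside `Fin n` (identity at the top). -/
def fsucc {n : ℕ} (e : Fin n) : Fin n := if h : e.val + 1 < n then ⟨e.val + 1, h⟩ else e

/-- The set `J_n^m` of permutations from the fusion combinatorics. -/
def Jset (n m : ℕ) : Finset (Equiv.Perm (Fin n)) :=
  univ.filter fun σ =>
    (∀ k l : Fin n, k.val % 2 = 0 → l.val % 2 = 0 → k.val < l.val → l.val < 2 * m →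
      σ k < σ l) ∧
    (∀ k : Fin n, k.val % 2 = 0 → k.val < 2 * m → σ k < σ (fsucc k)) ∧
    ∀ k l : Fin n, 2 * m ≤ k.val → k.val < l.val → σ k < σ l


/-! ### Coulomb gas correlations and their derivatives -/

/-- The logarithm of the Coulomb gas correlation `∏_{a<b} |y_b - y_a|^{s_a s_b/2}` of charges `s`
at the points labelled by `T`, written as a sum over all ordered pairs; the diagonal terms vanish
because `log 0 = 0`. -/
def coulombLog {n : ℕ} (T : Finset (Fin n)) (s y : Fin n → ℝ) : ℝ :=
  ∑ a ∈ T, ∑ b ∈ T, s a * s b / 4 * Real.log (y a - y b)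

/-- The logarithmic derivative of the Coulomb gas correlation at the `i`-th point; the term
`b = i` vanishes because `0⁻¹ = 0`. -/
def coulombGrad {n : ℕ} (T : Finset (Fin n)) (s : Fin n → ℝ) (i : Fin n) (y : Fin n → ℝ) : ℝ :=
  ∑ b ∈ T, s i * s b / 2 * (y i - y b)⁻¹

/-- Charges of the fused correlation: the fused point carries twice the charge `σ j`. -/
def fusedCharge {n : ℕ} (σ : Fin n → ℝ) (j : ℕ) (i : Fin n) : ℝ :=
  if i.val = j then 2 * σ i else σ i

lemma hasFDerivAt_coord_sub {n : ℕ} (a b : Fin n) (y : Fin n → ℝ) :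
    HasFDerivAt (fun z : Fin n → ℝ => z a - z b)
      (ContinuousLinearMap.proj (R := ℝ) (φ := fun _ : Fin n => ℝ) a -
        ContinuousLinearMap.proj (R := ℝ) (φ := fun _ : Fin n => ℝ) b) y :=
  (hasFDerivAt_apply a y).sub (hasFDerivAt_apply b y)

lemma hasFDerivAt_log_coord_sub {n : ℕ} (a b : Fin n) (y : Fin n → ℝ) (h : a ≠ b → y a ≠ y b) :
    HasFDerivAt (fun z : Fin n → ℝ => Real.log (z a - z b))
      ((y a - y b)⁻¹ • (ContinuousLinearMap.proj (R := ℝ) (φ := fun _ : Fin n => ℝ) a -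
        ContinuousLinearMap.proj (R := ℝ) (φ := fun _ : Fin n => ℝ) b)) y := by
  by_cases hab : a = b
  · subst hab
    simpa using hasFDerivAt_const (0 : ℝ) y
  · exact (hasFDerivAt_coord_sub a b y).log (sub_ne_zero.2 (h hab))

lemma hasFDerivAt_inv_coord_sub {n : ℕ} (a b : Fin n) (y : Fin n → ℝ) (h : a ≠ b → y a ≠ y b) :
    HasFDerivAt (fun z : Fin n → ℝ => (z a - z b)⁻¹)
      ((-((y a - y b) ^ 2)⁻¹) • (ContinuousLinearMap.proj (R := ℝ) (φ := fun _ : Fin n => ℝ) a -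
        ContinuousLinearMap.proj (R := ℝ) (φ := fun _ : Fin n => ℝ) b)) y := by
  by_cases hab : a = b
  · subst hab
    simpa using hasFDerivAt_const (0 : ℝ) y
  · exact (hasDerivAt_inv (sub_ne_zero.2 (h hab))).comp_hasFDerivAt y (hasFDerivAt_coord_sub a b y)

lemma differentiableAt_coulombLog {n : ℕ} (T : Finset (Fin n)) (s y : Fin n → ℝ)
    (hy : ∀ a ∈ T, ∀ b ∈ T, a ≠ b → y a ≠ y b) :
    DifferentiableAt ℝ (coulombLog T s) y :=
  (HasFDerivAt.fun_sum fun a ha => HasFDerivAt.fun_sum fun b hb =>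
    (hasFDerivAt_log_coord_sub a b y (hy a ha b hb)).const_mul (s a * s b / 4)).differentiableAt

lemma pd_coulombLog {n : ℕ} (T : Finset (Fin n)) (s y : Fin n → ℝ)
    (hy : ∀ a ∈ T, ∀ b ∈ T, a ≠ b → y a ≠ y b) {i : Fin n} (hi : i ∈ T) :
    pd i (coulombLog T s) y = coulombGrad T s i y := by
  have h : HasFDerivAt (coulombLog T s) _ y :=
    HasFDerivAt.fun_sum fun a ha => HasFDerivAt.fun_sum fun b hb =>
      (hasFDerivAt_log_coord_sub a b y (hy a ha b hb)).const_mul (s a * s b / 4)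
  rw [pd, h.fderiv]
  simp only [_root_.sum_apply, _root_.smul_apply,
    _root_.sub_apply, ContinuousLinearMap.proj_apply, smul_eq_mul, Pi.single_apply,
    mul_sub, mul_ite, mul_one, mul_zero, Finset.sum_sub_distrib]
  rw [Finset.sum_comm (f := fun a b => if a = i then _ else _)]
  simp only [Finset.sum_ite_eq', hi, if_true]
  rw [coulombGrad, ← Finset.sum_sub_distrib]
  refine Finset.sum_congr rfl fun b _ => ?_
  rw [← neg_sub (y i) (y b), inv_neg]
  ring

lemma differentiableAt_coulombGrad {n : ℕ} (T : Finset (Fin n)) (s y : Fin n → ℝ)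
    (hy : ∀ a ∈ T, ∀ b ∈ T, a ≠ b → y a ≠ y b) {i : Fin n} (hi : i ∈ T) :
    DifferentiableAt ℝ (coulombGrad T s i) y :=
  (HasFDerivAt.fun_sum fun b hb =>
    (hasFDerivAt_inv_coord_sub i b y (hy i hi b hb)).const_mul (s i * s b / 2)).differentiableAt

lemma pd_coulombGrad {n : ℕ} (T : Finset (Fin n)) (s y : Fin n → ℝ)
    (hy : ∀ a ∈ T, ∀ b ∈ T, a ≠ b → y a ≠ y b) {i : Fin n} (hi : i ∈ T) :
    pd i (coulombGrad T s i) y = -∑ b ∈ T, s i * s b / 2 * ((y b - y i)⁻¹) ^ 2 := by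
  have h : HasFDerivAt (coulombGrad T s i) _ y :=
    HasFDerivAt.fun_sum fun b hb =>
      (hasFDerivAt_inv_coord_sub i b y (hy i hi b hb)).const_mul (s i * s b / 2)
  rw [pd, h.fderiv, ← Finset.sum_neg_distrib]
  simp only [_root_.sum_apply, _root_.smul_apply,
    _root_.sub_apply, ContinuousLinearMap.proj_apply, smul_eq_mul]
  refine Finset.sum_congr rfl fun b _ => ?_
  by_cases hb : b = i
  · subst hb
    simp
  · rw [Pi.single_eq_same, Pi.single_eq_of_ne hb, ← neg_sub (y b) (y i), neg_sq, inv_pow]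
    ring

/-! ### The rational identity -/

/-- Partial fractions `1/((x_a-x_b)(x_a-x_m)) - 1/((x_a-x_b)(x_b-x_m)) = -1/((x_a-x_m)(x_b-x_m))`,
with correction terms that make the identity hold for coinciding labels when `0⁻¹ = 0`. -/
lemma partial_fractions {n : ℕ} (T : Finset (Fin n)) (x : Fin n → ℝ)
    (hx : ∀ a ∈ T, ∀ b ∈ T, a ≠ b → x a ≠ x b) {a b m : Fin n} (ha : a ∈ T) (hb : b ∈ T)
    (hm : m ∈ T) :
    (x a - x b)⁻¹ * ((x a - x m)⁻¹ - (x b - x m)⁻¹) =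
      -((x a - x m)⁻¹ * (x b - x m)⁻¹) + (if a = b then ((x a - x m)⁻¹) ^ 2 else 0) +
      (if b = m then ((x a - x m)⁻¹) ^ 2 else 0) + (if a = m then ((x b - x m)⁻¹) ^ 2 else 0) := by
  by_cases hab : a = b
  · subst hab
    by_cases ham : a = m
    · subst ham
      simp
    · simp only [ham, if_true, if_false, sub_self]
      ring
  · by_cases ham : a = m
    · subst ham
      simp only [hab, Ne.symm hab, if_true, if_false, sub_self, inv_zero]
      rw [← neg_sub (x b) (x a), inv_neg]
      ring
    · by_cases hbm : b = m
      · subst hbm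
        simp only [hab, if_true, if_false, sub_self, inv_zero]
        ring
      · have h1 := sub_ne_zero.2 (hx a ha b hb hab)
        have h2 := sub_ne_zero.2 (hx a ha m hm ham)
        have h3 := sub_ne_zero.2 (hx b hb m hm hbm)
        simp only [hab, ham, hbm, if_false]
        field_simp
        ring

/-- The null-vector identity behind the second-order equation at a point `m` of charge
`±1`, the other charges being arbitrary. -/
lemma coulomb_identity {n : ℕ} (T : Finset (Fin n)) (s x : Fin n → ℝ)
    (hx : ∀ a ∈ T, ∀ b ∈ T, a ≠ b → x a ≠ x b) {m : Fin n} (hm : m ∈ T) (hs : s m ^ 2 = 1) :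
    coulombGrad T s m x ^ 2 - ∑ b ∈ T, s m * s b / 2 * ((x b - x m)⁻¹) ^ 2 =
      ∑ a ∈ T, (s a ^ 2 / 4 * ((x a - x m)⁻¹) ^ 2 - coulombGrad T s a x * (x a - x m)⁻¹) := by
  have hG : coulombGrad T s m x = -(s m / 2 * ∑ b ∈ T, s b * (x b - x m)⁻¹) := by
    rw [coulombGrad, Finset.mul_sum, ← Finset.sum_neg_distrib]
    refine Finset.sum_congr rfl fun b _ => ?_
    rw [← neg_sub (x b) (x m), inv_neg]
    ring
  have hG2 : coulombGrad T s m x ^ 2 = (∑ b ∈ T, s b * (x b - x m)⁻¹) ^ 2 / 4 := by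
    rw [hG]
    linear_combination (∑ b ∈ T, s b * (x b - x m)⁻¹) ^ 2 / 4 * hs
  have hcross : ∑ a ∈ T, coulombGrad T s a x * (x a - x m)⁻¹ =
      ∑ a ∈ T, ∑ b ∈ T, s a * s b / 2 * ((x a - x b)⁻¹ * (x a - x m)⁻¹) := by
    refine Finset.sum_congr rfl fun a _ => ?_
    rw [coulombGrad, Finset.sum_mul]
    exact Finset.sum_congr rfl fun b _ => by ring
  have hcross' : ∑ a ∈ T, coulombGrad T s a x * (x a - x m)⁻¹ =
      -∑ a ∈ T, ∑ b ∈ T, s a * s b / 2 * ((x a - x b)⁻¹ * (x b - x m)⁻¹) := by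
    rw [hcross, Finset.sum_comm, ← Finset.sum_neg_distrib]
    refine Finset.sum_congr rfl fun a _ => ?_
    rw [← Finset.sum_neg_distrib]
    refine Finset.sum_congr rfl fun b _ => ?_
    rw [← neg_sub (x a) (x b), inv_neg]
    ring
  have hsym : 2 * ∑ a ∈ T, coulombGrad T s a x * (x a - x m)⁻¹ =
      ∑ a ∈ T, ∑ b ∈ T, s a * s b / 2 *
        ((x a - x b)⁻¹ * ((x a - x m)⁻¹ - (x b - x m)⁻¹)) := by
    rw [two_mul]
    nth_rewrite 1 [hcross]
    rw [hcross', ← sub_eq_add_neg, ← Finset.sum_sub_distrib]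
    refine Finset.sum_congr rfl fun a _ => ?_
    rw [← Finset.sum_sub_distrib]
    exact Finset.sum_congr rfl fun b _ => by ring
  have hval : 2 * ∑ a ∈ T, coulombGrad T s a x * (x a - x m)⁻¹ =
      -(∑ b ∈ T, s b * (x b - x m)⁻¹) ^ 2 / 2 + ∑ a ∈ T, s a ^ 2 / 2 * ((x a - x m)⁻¹) ^ 2 +
      ∑ a ∈ T, s m * s a / 2 * ((x a - x m)⁻¹) ^ 2 +
      ∑ a ∈ T, s m * s a / 2 * ((x a - x m)⁻¹) ^ 2 := by
    rw [hsym]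
    rw [Finset.sum_congr rfl fun a ha => Finset.sum_congr rfl fun b hb => by
      rw [partial_fractions T x hx ha hb hm]]
    simp only [mul_add, Finset.sum_add_distrib, mul_ite, mul_zero]
    rw [Finset.sum_comm (f := fun a b => if a = m then _ else _)]
    simp only [Finset.sum_ite_eq, Finset.sum_ite_eq', hm, if_true]
    congr 1
    congr 1
    · congr 1
      · rw [sq, Finset.sum_mul_sum, neg_div, Finset.sum_div, ← Finset.sum_neg_distrib]
        refine Finset.sum_congr rfl fun a _ => ?_
        rw [Finset.sum_div, ← Finset.sum_neg_distrib]
        exact Finset.sum_congr rfl fun b _ => by ring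
      · exact Finset.sum_congr rfl fun a ha => by rw [if_pos ha]; ring
    · exact Finset.sum_congr rfl fun a _ => by ring
  have hhalf : ∑ a ∈ T, s a ^ 2 / 2 * ((x a - x m)⁻¹) ^ 2 =
      2 * ∑ a ∈ T, s a ^ 2 / 4 * ((x a - x m)⁻¹) ^ 2 := by
    rw [Finset.mul_sum]
    exact Finset.sum_congr rfl fun a _ => by ring
  rw [Finset.sum_sub_distrib, hG2]
  linear_combination (1 / 2) * hval + (1 / 2) * hhalf

/-! ### The fused conformal block as a Coulomb gas correlation -/

lemma isOpen_fusedChamber (n j : ℕ) : IsOpen (fusedChamber n j) := by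
  simp only [fusedChamber, Set.ofPred_forall]
  refine isOpen_iInter_of_finite fun k => isOpen_iInter_of_finite fun l =>
    isOpen_iInter_of_finite fun _ => isOpen_iInter_of_finite fun _ =>
    isOpen_iInter_of_finite fun _ => isOpen_lt (continuous_apply k) (continuous_apply l)

lemma fusedChamber_ne {n j : ℕ} {y : Fin n → ℝ} (hy : y ∈ fusedChamber n j) {a b : Fin n}
    (ha : a.val ≠ j + 1) (hb : b.val ≠ j + 1) (hab : a ≠ b) : y a ≠ y b := by
  rcases lt_or_gt_of_ne hab with h | h
  · exact (hy a b h ha hb).ne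
  · exact (hy b a h hb ha).ne'

/-- On the fused chamber, `U_{σ/×_j}` is the Coulomb gas correlation with the fused charges. -/
lemma Ufuse_eq_exp {n : ℕ} (σ : Fin n → ℝ) (j : ℕ) (hj : j + 1 < n) {y : Fin n → ℝ}
    (hy : y ∈ fusedChamber n j) :
    Ufuse σ j hj y = Real.exp (coulombLog (univ.filter fun i : Fin n => i.val ≠ j + 1)
      (fusedCharge σ j) y) := by
  set J : Fin n := ⟨j, by omega⟩ with hJ
  set T' : Finset (Fin n) := univ.filter fun i : Fin n => i.val ≠ j ∧ i.val ≠ j + 1 with hT'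
  have hT : (univ.filter fun i : Fin n => i.val ≠ j + 1) = insert J T' := by
    ext i
    simp only [hT', hJ, Finset.mem_filter, Finset.mem_insert, Finset.mem_univ, true_and,
      Fin.ext_iff]
    omega
  have hJT : J ∉ T' := by simp [hT', hJ]
  have hlogsymm : ∀ a b : Fin n, Real.log (y a - y b) = Real.log (y b - y a) := fun a b => by
    rw [← neg_sub, Real.log_neg_eq_log]
  have hcJ : fusedCharge σ j J = 2 * σ J := by simp [fusedCharge, hJ]
  have hc : ∀ a ∈ T', fusedCharge σ j a = σ a := fun a ha => by
    have : a.val ≠ j := (Finset.mem_filter.1 ha).2.1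
    simp [fusedCharge, this]
  -- The sum over ordered pairs of unfused labels is twice the sum over increasing pairs.
  have hpairs : ∑ a ∈ T', ∑ b ∈ T', σ a * σ b / 4 * Real.log (y a - y b) =
      ∑ p ∈ univ.filter (fun p : Fin n × Fin n =>
        p.1 < p.2 ∧ p.1.val ≠ j ∧ p.1.val ≠ j + 1 ∧ p.2.val ≠ j ∧ p.2.val ≠ j + 1),
        σ p.1 * σ p.2 / 2 * Real.log (y p.2 - y p.1) := by
    have hfilter : univ.filter (fun p : Fin n × Fin n =>
        p.1 < p.2 ∧ p.1.val ≠ j ∧ p.1.val ≠ j + 1 ∧ p.2.val ≠ j ∧ p.2.val ≠ j + 1) =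
        (T' ×ˢ T').filter fun p => p.1 < p.2 := by
      ext p
      simp only [hT', Finset.mem_filter, Finset.mem_product, Finset.mem_univ, true_and]
      tauto
    rw [hfilter, Finset.sum_filter (s := T' ×ˢ T'), Finset.sum_product]
    have hsplit : ∀ a b : Fin n, σ a * σ b / 4 * Real.log (y a - y b) =
        (if a < b then σ a * σ b / 4 * Real.log (y b - y a) else 0) +
        (if b < a then σ b * σ a / 4 * Real.log (y a - y b) else 0) := fun a b => by
      rcases lt_trichotomy a b with h | h | h
      · rw [if_pos h, if_neg h.not_gt, hlogsymm, add_zero]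
      · subst h
        simp
      · rw [if_pos h, if_neg h.not_gt, zero_add, mul_comm (σ a)]
    simp only [hsplit, Finset.sum_add_distrib]
    rw [Finset.sum_comm (f := fun a b => if b < a then _ else _), ← Finset.sum_add_distrib]
    refine Finset.sum_congr rfl fun a _ => ?_
    rw [← Finset.sum_add_distrib]
    refine Finset.sum_congr rfl fun b _ => ?_
    split_ifs
    · rw [← hlogsymm]
      ring
    · simp
  have hlog : coulombLog (insert J T') (fusedCharge σ j) y =
      ∑ p ∈ univ.filter (fun p : Fin n × Fin n =>
        p.1 < p.2 ∧ p.1.val ≠ j ∧ p.1.val ≠ j + 1 ∧ p.2.val ≠ j ∧ p.2.val ≠ j + 1),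
        σ p.1 * σ p.2 / 2 * Real.log (y p.2 - y p.1) +
      ∑ i ∈ T', σ i * σ J * Real.log (y i - y J) := by
    rw [← hpairs, coulombLog]
    simp only [Finset.sum_insert hJT, Finset.sum_add_distrib, sub_self, Real.log_zero, mul_zero,
      zero_add, hcJ]
    have h1 : ∑ b ∈ T', 2 * σ J * fusedCharge σ j b / 4 * Real.log (y J - y b) =
        ∑ i ∈ T', σ i * σ J / 2 * Real.log (y i - y J) :=
      Finset.sum_congr rfl fun b hb => by rw [hc b hb, hlogsymm J b]; ring
    have h2 : ∑ b ∈ T', fusedCharge σ j b * (2 * σ J) / 4 * Real.log (y b - y J) =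
        ∑ i ∈ T', σ i * σ J / 2 * Real.log (y i - y J) :=
      Finset.sum_congr rfl fun b hb => by rw [hc b hb]; ring
    have h3 : ∑ i ∈ T', σ i * σ J * Real.log (y i - y J) =
        2 * ∑ i ∈ T', σ i * σ J / 2 * Real.log (y i - y J) := by
      rw [Finset.mul_sum]
      exact Finset.sum_congr rfl fun b _ => by ring
    have h4 : ∑ a ∈ T', ∑ b ∈ T', fusedCharge σ j a * fusedCharge σ j b / 4 *
        Real.log (y a - y b) = ∑ a ∈ T', ∑ b ∈ T', σ a * σ b / 4 * Real.log (y a - y b) :=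
      Finset.sum_congr rfl fun a ha => Finset.sum_congr rfl fun b hb => by rw [hc a ha, hc b hb]
    rw [h1, h2, h3, h4]
    ring
  rw [hT, hlog, Real.exp_add, Real.exp_sum, Real.exp_sum, Ufuse]
  congr 1
  · refine Finset.prod_congr rfl fun p hp => ?_
    obtain ⟨hlt, _, h1, _, h2⟩ := (Finset.mem_filter.1 hp).2
    rw [Real.rpow_def_of_pos (sub_pos.2 (hy p.1 p.2 hlt h1 h2)), mul_comm]
  · refine Finset.prod_congr rfl fun i hi => ?_
    have hne : y i ≠ y J := fusedChamber_ne hy (Finset.mem_filter.1 hi).2.2 (by simp [hJ])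
      fun h => hJT (h ▸ hi)
    rw [Real.rpow_def_of_pos (abs_pos.2 (sub_ne_zero.2 hne)), Real.log_abs, mul_comm]

lemma pd_congr {n : ℕ} {i : Fin n} {f g : (Fin n → ℝ) → ℝ} {x : Fin n → ℝ} (h : f =ᶠ[𝓝 x] g) :
    pd i f x = pd i g x := by
  rw [pd, pd, h.fderiv_eq]

/-- `U_{σ/×_j}` satisfies the second-order PDEs (κ = 4, h = 1/4, H = 1)
in the unfused variables (the fusion point `ξ` is coordinate `j`; coordinate `j+1` is
ignored). -/
theorem Ufuse_secondOrderPDE (N : ℕ) (hN : 1 ≤ N)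
    (σ : Fin (2 * N) → ℝ) (hσ : IsDyck σ)
    (j : ℕ) (hj : j + 1 < 2 * N)
    (hslope : σ ⟨j, by omega⟩ = σ ⟨j + 1, hj⟩) :
    ∀ n : Fin (2 * N), n.val ≠ j → n.val ≠ j + 1 →
      ∀ x ∈ fusedChamber (2 * N) j,
        pd n (pd n (Ufuse σ j hj)) x =
          (∑ i ∈ univ.filter (fun i : Fin (2 * N) =>
              i.val ≠ j ∧ i.val ≠ j + 1 ∧ i ≠ n),
            ((1 / 4) * Ufuse σ j hj x / (x i - x n) ^ 2 -
              pd i (Ufuse σ j hj) x / (x i - x n))) +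
          Ufuse σ j hj x / (x ⟨j, by omega⟩ - x n) ^ 2 -
          pd ⟨j, by omega⟩ (Ufuse σ j hj) x / (x ⟨j, by omega⟩ - x n) := by
  intro n hnj hnj1 x hx
  set J : Fin (2 * N) := ⟨j, by omega⟩ with hJ
  set T : Finset (Fin (2 * N)) := univ.filter fun i => i.val ≠ j + 1 with hT
  set s := fusedCharge σ j with hs
  have hmem : ∀ i : Fin (2 * N), i ∈ T ↔ i.val ≠ j + 1 := fun i => by simp [hT]
  have hne : ∀ y ∈ fusedChamber (2 * N) j, ∀ a ∈ T, ∀ b ∈ T, a ≠ b → y a ≠ y b :=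
    fun y hy a ha b hb hab => fusedChamber_ne hy ((hmem a).1 ha) ((hmem b).1 hb) hab
  have hev : ∀ y ∈ fusedChamber (2 * N) j, ∀ᶠ z in 𝓝 y, z ∈ fusedChamber (2 * N) j :=
    fun y hy => (isOpen_fusedChamber (2 * N) j).mem_nhds hy
  have hdiff : ∀ y ∈ fusedChamber (2 * N) j, HasFDerivAt (Ufuse σ j hj)
      (Ufuse σ j hj y • fderiv ℝ (coulombLog T s) y) y := fun y hy => by
    have h := (differentiableAt_coulombLog T s y (hne y hy)).hasFDerivAt.exp
    rw [← Ufuse_eq_exp σ j hj hy] at h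
    exact h.congr_of_eventuallyEq ((hev y hy).mono fun z hz => Ufuse_eq_exp σ j hj hz)
  have hpd : ∀ i ∈ T, ∀ y ∈ fusedChamber (2 * N) j,
      pd i (Ufuse σ j hj) y = Ufuse σ j hj y * coulombGrad T s i y := fun i hi y hy => by
    rw [pd, (hdiff y hy).fderiv, ← pd_coulombLog T s y (hne y hy) hi]
    rfl
  have hn : n ∈ T := (hmem n).2 hnj1
  have hpd2 : pd n (pd n (Ufuse σ j hj)) x = Ufuse σ j hj x *
      (coulombGrad T s n x ^ 2 - ∑ b ∈ T, s n * s b / 2 * ((x b - x n)⁻¹) ^ 2) := by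
    rw [pd_congr (g := fun y => Ufuse σ j hj y * coulombGrad T s n y)
      ((hev x hx).mono fun y hy => hpd n hn y hy), pd,
      ((hdiff x hx).fun_mul (differentiableAt_coulombGrad T s x (hne x hx) hn).hasFDerivAt).fderiv]
    have h1 : fderiv ℝ (coulombGrad T s n) x (Pi.single n 1) = _ :=
      pd_coulombGrad T s x (hne x hx) hn
    have h2 : fderiv ℝ (coulombLog T s) x (Pi.single n 1) = _ :=
      pd_coulombLog T s x (hne x hx) hn
    simp only [_root_.add_apply, _root_.smul_apply, smul_eq_mul, h1, h2]
    ring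
  have hsn : s n ^ 2 = 1 := by
    rcases hσ.1 n with h | h <;> simp [hs, fusedCharge, hnj, h]
  rw [hpd2, coulomb_identity T s x (hne x hx) hn hsn]
  -- The label `n` contributes zero to the sum over `T`, since `0⁻¹ = 0`.
  have hTsplit : T = insert n (insert J (univ.filter fun i : Fin (2 * N) =>
      i.val ≠ j ∧ i.val ≠ j + 1 ∧ i ≠ n)) := by
    ext i
    simp only [hmem, hJ, Finset.mem_insert, Finset.mem_filter, Finset.mem_univ, true_and,
      Fin.ext_iff]
    omega
  have hJT : J ∈ T := (hmem J).2 (by simp [hJ])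
  have hsJ : s J ^ 2 = 4 := by
    rcases hσ.1 J with h | h <;> simp only [hs, fusedCharge, hJ, if_true] <;>
      rw [← hJ, h] <;> norm_num
  have hsum : ∀ f : Fin (2 * N) → ℝ, f n = 0 → ∑ a ∈ T, f a =
      ∑ a ∈ univ.filter (fun i : Fin (2 * N) => i.val ≠ j ∧ i.val ≠ j + 1 ∧ i ≠ n), f a + f J := by
    intro f hf
    rw [hTsplit, Finset.sum_insert (by simp [hJ, Fin.ext_iff, hnj]),
      Finset.sum_insert (by simp [hJ]), hf]
    ring
  rw [hsum _ (by simp), hsJ, mul_add, Finset.mul_sum, hpd J hJT x hx, add_sub_assoc]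
  congr 1
  · refine Finset.sum_congr rfl fun i hi => ?_
    obtain ⟨hij, hij1, _⟩ := (Finset.mem_filter.1 hi).2
    have hsi : s i ^ 2 = 1 := by
      rcases hσ.1 i with h | h <;> simp [hs, fusedCharge, hij, h]
    rw [hsi, hpd i ((hmem i).2 hij1) x hx]
    simp only [div_eq_mul_inv, inv_pow]
    ring
  · simp only [div_eq_mul_inv, inv_pow]
    ring
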